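/- The coefficients b_j of θ_∞(t) = AH(γt) satisfy ord(b_j) ≥ j/(p−1) for all j ≥ 0. -/

import Mathlib

namespace PowerSeries

theorem coeff_pow_card_sub_coeff_expand_mem_maximalIdeal {p : ℕ} [Fact p.Prime]
    (f : PowerSeries ℤ_[p]) (n : ℕ) :
    coeff n (f ^ p) - coeff n (expand p (NeZero.ne p) f) ∈ IsLocalRing.maximalIdeal ℤ_[p] := by
  rw [← PadicInt.ker_toZMod, RingHom.mem_ker, map_sub, ← coeff_map, ← coeff_map, map_pow,
    map_expand, sub_eq_zero]
  congr 1
  have h := MvPowerSeries.map_frobenius_expand p (NeZero.ne p)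
    (f := (map PadicInt.toZMod f : PowerSeries (ZMod p)))
  rw [ZMod.frobenius_zmod, MvPowerSeries.map_id] at h
  exact h.symm

/-- The inductive step of Dwork's lemma. -/
theorem norm_coeff_le_one_of_pow {p : ℕ} [Fact p.Prime] {a : PowerSeries ℚ_[p]} {n : ℕ}
    (hn : n ≠ 0) (h0 : constantCoeff a = 1) (hlt : ∀ i < n, ‖coeff i a‖ ≤ 1)
    (h : ‖coeff n (a ^ p) - coeff n (expand p (NeZero.ne p) a)‖ < 1) : ‖coeff n a‖ ≤ 1 := by
  have hp : p.Prime := Fact.out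
  let f : PowerSeries ℤ_[p] := mk fun i => if h : i < n then (⟨coeff i a, hlt i h⟩ : ℤ_[p]) else 0
  set u : PowerSeries ℚ_[p] := map PadicInt.Coe.ringHom f with hu
  have hu_lt : ∀ i < n, coeff i u = coeff i a := by
    intro i hi
    rw [hu, coeff_map, coeff_mk]
    exact congrArg PadicInt.Coe.ringHom (dif_pos hi)
  have hu_n : coeff n u = 0 := by simp [hu, f]
  have hu0 : constantCoeff u = 1 := by
    rw [← coeff_zero_eq_constantCoeff_apply, hu_lt 0 (Nat.pos_of_ne_zero hn)]
    simpa using h0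
  obtain ⟨w, hw⟩ : X ^ n ∣ a - u := by
    rw [X_pow_dvd_iff]
    intro i hi
    rw [map_sub, hu_lt i hi, sub_self]
  have hw0 : constantCoeff w = coeff n a := by
    have := congrArg (coeff n) hw
    rw [map_sub, hu_n, sub_zero, coeff_X_pow_mul', if_pos le_rfl] at this
    simpa using this.symm
  have hpow : coeff n (a ^ p) = coeff n (u ^ p) + p * coeff n a := by
    obtain ⟨k, hk⟩ := Polynomial.powAddExpansion u (X ^ n * w) p
    rw [← hw, add_sub_cancel] at hk
    have h1 : (p : PowerSeries ℚ_[p]) * u ^ (p - 1) * (a - u)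
        = X ^ n * (C (p : ℚ_[p]) * (u ^ (p - 1) * w)) := by
      rw [hw, map_natCast]; ring
    have h2 : k * (a - u) ^ 2 = X ^ (2 * n) * (k * w ^ 2) := by
      rw [hw]; ring
    rw [hk, h1, h2, map_add, map_add, coeff_X_pow_mul', coeff_X_pow_mul', if_pos le_rfl,
      if_neg (by omega), Nat.sub_self, coeff_C_mul]
    simp [hu0, hw0]
  have hexp : coeff n (expand p (NeZero.ne p) a) = coeff n (expand p (NeZero.ne p) u) := by
    rw [coeff_expand, coeff_expand, hu_lt _ (Nat.div_lt_self (Nat.pos_of_ne_zero hn) hp.one_lt)]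
  have hmem := coeff_pow_card_sub_coeff_expand_mem_maximalIdeal f n
  set z := coeff n (f ^ p) - coeff n (expand p (NeZero.ne p) f) with hz
  have hzu : (z : ℚ_[p]) = coeff n (u ^ p) - coeff n (expand p (NeZero.ne p) u) := by
    rw [hu, ← map_pow, ← map_expand, coeff_map, coeff_map, hz]
    exact PadicInt.coe_sub _ _
  have hz1 : ‖(z : ℚ_[p])‖ < 1 := by
    rwa [PadicInt.maximalIdeal_eq_span_p, Ideal.mem_span_singleton,
      ← PadicInt.norm_lt_one_iff_dvd] at hmem
  have hpa : ‖(p : ℚ_[p]) * coeff n a‖ < 1 := by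
    have : (p : ℚ_[p]) * coeff n a
        = (coeff n (a ^ p) - coeff n (expand p (NeZero.ne p) a)) - z := by
      rw [hzu, hpow, hexp]; ring
    rw [this]
    rw [sub_eq_add_neg]
    exact (IsUltrametricDist.norm_add_le_max _ _).trans_lt (max_lt h (by rwa [norm_neg]))
  let y : ℤ_[p] := ⟨(p : ℚ_[p]) * coeff n a, hpa.le⟩
  obtain ⟨t, ht⟩ := (PadicInt.norm_lt_one_iff_dvd y).1 hpa
  have ht' : (p : ℚ_[p]) * coeff n a = p * t := by
    simpa [y] using congrArg (fun x : ℤ_[p] => (x : ℚ_[p])) ht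
  rw [mul_left_cancel₀ (Nat.cast_ne_zero.2 hp.ne_zero) ht']
  exact t.2

theorem norm_coeff_rescale_exp_lt_one {p : ℕ} [Fact p.Prime] {n : ℕ} (hn : n ≠ 0) :
    ‖coeff n (rescale (p : ℚ_[p]) (exp ℚ_[p]))‖ < 1 := by
  rw [coeff_rescale, coeff_exp, map_div₀, map_one, map_natCast, mul_one_div, norm_div,
    div_lt_one (by simp [Nat.factorial_ne_zero]), norm_pow, Padic.norm_p]
  by_contra! hle
  have := (Padic.norm_int_le_pow_iff_dvd (p := p) (n.factorial : ℤ) n).1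
    (by simpa using hle)
  have hdvd : p ^ n ∣ n.factorial := by exact_mod_cast this
  rw [padicValNat_dvd_iff_le n.factorial_ne_zero] at hdvd
  exact absurd (padicValNat_factorial_lt_of_ne_zero p hn) (not_lt.2 hdvd)

section expPow

variable {A B : Type*} [CommRing A] [Algebra ℚ A] [CommRing B] [Algebra ℚ B]

/-- The power series `exp (c * X ^ p ^ j)`. -/
noncomputable def expPow (p : ℕ) [NeZero p] (j : ℕ) (c : A) : PowerSeries A :=
  expand (p ^ j) (pow_ne_zero j (NeZero.ne p)) (rescale c (exp A))

variable {p : ℕ} [NeZero p]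

theorem coeff_expPow (j n : ℕ) (c : A) :
    coeff n (expPow p j c) =
      if p ^ j ∣ n then c ^ (n / p ^ j) * algebraMap ℚ A (1 / (n / p ^ j).factorial) else 0 := by
  rw [expPow, coeff_expand, coeff_rescale, coeff_exp]

theorem map_expPow (φ : A →+* B) (j : ℕ) (c : A) :
    map φ (expPow p j c) = expPow p j (φ c) := by
  rw [expPow, map_expand, ← rescale_map, map_exp, expPow]

theorem rescale_expPow (j : ℕ) (r c : A) :
    rescale r (expPow p j c) = expPow p j (r ^ p ^ j * c) := by
  ext n
  rw [coeff_rescale, coeff_expPow, coeff_expPow]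
  split_ifs with h
  · obtain ⟨m, rfl⟩ := h
    rw [Nat.mul_div_cancel_left _ (pow_pos (NeZero.pos p) j), mul_pow, ← pow_mul, mul_assoc]
  · rw [mul_zero]

theorem expPow_pow (j k : ℕ) (c : A) : expPow p j c ^ k = expPow p j (k * c) := by
  rw [expPow, ← map_pow, ← map_pow, exp_pow_eq_rescale_exp, rescale_rescale, expPow]

theorem expand_expPow (j : ℕ) (c : A) :
    expand p (NeZero.ne p) (expPow p j c) = expPow p (j + 1) c := by
  rw [expPow, ← expand_mul, expPow]
  simp only [pow_succ']

theorem X_pow_dvd_expPow_sub_one (j : ℕ) (c : A) : X ^ p ^ j ∣ expPow p j c - 1 := by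
  rw [X_pow_dvd_iff]
  intro m hm
  rw [map_sub, coeff_expPow, coeff_one, sub_eq_zero]
  by_cases hm0 : m = 0
  · simp [hm0]
  · rw [if_neg (fun h => hm0 (Nat.eq_zero_of_dvd_of_lt h hm)), if_neg hm0]

theorem coeff_mul_expPow (f : PowerSeries A) {j n : ℕ} (hn : n < p ^ j) (c : A) :
    coeff n (f * expPow p j c) = coeff n f := by
  obtain ⟨g, hg⟩ := X_pow_dvd_expPow_sub_one (p := p) j c
  have : f * expPow p j c = f + X ^ p ^ j * (f * g) := by
    rw [sub_eq_iff_eq_add.1 hg]; ring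
  rw [this, map_add, coeff_X_pow_mul', if_neg (not_le.2 hn), add_zero]

theorem coeff_prod_expPow {K : Type*} [Field K] [Algebra ℚ K] {p : ℕ} (hp : 1 < p) [NeZero p]
    (c : ℕ → K) (n : ℕ) :
    coeff n (∏ j ∈ Finset.range (n + 1), expPow p j (c j)) =
      ∑ᶠ k ∈ {k : ℕ →₀ ℕ | (k.sum fun j kj => kj * p ^ j) = n},
        ∏ j ∈ (k : ℕ →₀ ℕ).support, c j ^ k j / ((k j).factorial : K) := by
  classical
  have hpos (j : ℕ) : 0 < p ^ j := pow_pos (by omega) j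
  let t := (Finset.finsuppAntidiag (Finset.range (n + 1)) n).filter fun l => ∀ j, p ^ j ∣ l j
  let e : (ℕ →₀ ℕ) → ℕ →₀ ℕ := fun k =>
    Finsupp.onFinset k.support (fun j => k j * p ^ j) fun j hj =>
      Finsupp.mem_support_iff.2 (left_ne_zero_of_mul hj)
  have he (k : ℕ →₀ ℕ) (j : ℕ) : e k j = k j * p ^ j := rfl
  have hsupp : ∀ k : ℕ →₀ ℕ, (k.sum fun j kj => kj * p ^ j) = n →
      k.support ⊆ Finset.range (n + 1) := by
    intro k hk j hj
    have h1 : k j * p ^ j ≤ n := by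
      rw [← hk]
      exact Finset.single_le_sum (f := fun j => k j * p ^ j) (fun _ _ => Nat.zero_le _) hj
    have h2 : 1 ≤ k j := Nat.one_le_iff_ne_zero.2 (Finsupp.mem_support_iff.1 hj)
    have h3 : j < p ^ j := Nat.lt_pow_self hp
    rw [Finset.mem_range]
    nlinarith
  have hbij : Set.BijOn e {k : ℕ →₀ ℕ | (k.sum fun j kj => kj * p ^ j) = n}
      (t : Set (ℕ →₀ ℕ)) := by
    refine ⟨fun k hk => ?_, fun k _ k' _ h => ?_, fun l hl => ?_⟩
    · have hk' := hsupp k hk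
      simp only [t, Finset.coe_filter, Set.mem_ofPred_eq, Finset.mem_finsuppAntidiag]
      refine ⟨⟨?_, Finsupp.support_onFinset_subset.trans hk'⟩, fun j => ⟨k j, mul_comm _ _⟩⟩
      refine Eq.trans ?_ hk.out
      rw [Finsupp.sum_of_support_subset k hk' _ (by simp)]
      rfl
    · ext j
      have := DFunLike.congr_fun h j
      rw [he, he] at this
      exact Nat.eq_of_mul_eq_mul_right (hpos j) this
    · simp only [t, Finset.coe_filter, Set.mem_ofPred_eq, Finset.mem_finsuppAntidiag] at hl
      obtain ⟨⟨hsum, hls⟩, hdvd⟩ := hl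
      let k : ℕ →₀ ℕ := Finsupp.onFinset l.support (fun j => l j / p ^ j) fun j hj =>
        Finsupp.mem_support_iff.2 fun h => hj (by simp [h])
      have hkl (j : ℕ) : k j * p ^ j = l j := Nat.div_mul_cancel (hdvd j)
      refine ⟨k, ?_, Finsupp.ext fun j => (he k j).trans (hkl j)⟩
      rw [Set.mem_ofPred_eq, Finsupp.sum_of_support_subset k
        (Finsupp.support_onFinset_subset.trans hls) _ (by simp)]
      exact (Finset.sum_congr rfl fun j _ => hkl j).trans hsum
  rw [finsum_mem_eq_of_bijOn e hbij
    (g := fun l => ∏ j ∈ Finset.range (n + 1), coeff (l j) (expPow p j (c j)))]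
  · rw [finsum_mem_coe_finset, coeff_prod, Finset.sum_filter_of_ne]
    intro l hl hne j
    by_contra hj
    have hjn : j ∈ Finset.range (n + 1) :=
      (Finset.mem_finsuppAntidiag.1 hl).2
        (Finsupp.mem_support_iff.2 fun h => hj (by simp [h]))
    exact hne (Finset.prod_eq_zero hjn (by rw [coeff_expPow, if_neg hj]))
  · intro k hk
    rw [← Finset.prod_subset (hsupp k hk)]
    · refine Finset.prod_congr rfl fun j _ => ?_
      rw [he, coeff_expPow, if_pos (Dvd.intro_left _ rfl), Nat.mul_div_cancel _ (hpos j)]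
      simp [div_eq_mul_inv]
    · intro j _ hj
      simp [he, coeff_expPow, Finsupp.notMem_support_iff.1 hj]

end expPow

section ArtinHasse

variable {p : ℕ} [Fact p.Prime]

theorem prod_expPow_pow (m : ℕ) :
    (∏ j ∈ Finset.range (m + 1), expPow p j ((p : ℚ_[p]) ^ j)⁻¹) ^ p =
      rescale (p : ℚ_[p]) (exp ℚ_[p]) *
        expand p (NeZero.ne p) (∏ j ∈ Finset.range m, expPow p j ((p : ℚ_[p]) ^ j)⁻¹) := by
  have hp : (p : ℚ_[p]) ≠ 0 := Nat.cast_ne_zero.2 (NeZero.ne p)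
  rw [Finset.prod_range_succ', mul_pow, mul_comm, map_prod, ← Finset.prod_pow]
  congr 1
  · rw [expPow_pow]
    simp [expPow]
  · refine Finset.prod_congr rfl fun j _ => ?_
    rw [expPow_pow, expand_expPow, pow_succ', mul_inv, mul_inv_cancel_left₀ hp]

theorem norm_coeff_prod_expPow_le_one (n m : ℕ) (hnm : n < p ^ m) :
    ‖coeff n (∏ j ∈ Finset.range m, expPow p j ((p : ℚ_[p]) ^ j)⁻¹)‖ ≤ 1 := by
  induction n using Nat.strong_induction_on with
  | _ n ih =>
  have hconst (k : ℕ) :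
      constantCoeff (∏ j ∈ Finset.range k, expPow p j ((p : ℚ_[p]) ^ j)⁻¹) = 1 := by
    rw [map_prod]
    exact Finset.prod_eq_one fun j _ => by
      simp [expPow, ← coeff_zero_eq_constantCoeff_apply, coeff_expand]
  rcases eq_or_ne n 0 with rfl | hn
  · simp [hconst]
  have hstab : ∀ i ≤ n, coeff i (∏ j ∈ Finset.range (m + 1), expPow p j ((p : ℚ_[p]) ^ j)⁻¹) =
      coeff i (∏ j ∈ Finset.range m, expPow p j ((p : ℚ_[p]) ^ j)⁻¹) := fun i hi => by
    rw [Finset.prod_range_succ, coeff_mul_expPow _ (hi.trans_lt hnm)]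
  rw [← hstab n le_rfl]
  refine norm_coeff_le_one_of_pow hn (hconst _) (fun i hi => ?_) ?_
  · rw [hstab i hi.le]
    exact ih i hi (hi.trans hnm)
  rw [prod_expPow_pow, coeff_mul, coeff_expand p (NeZero.ne p) (∏ j ∈ Finset.range (m + 1), _),
    hstab _ (Nat.div_le_self n p), ← coeff_expand p (NeZero.ne p),
    ← Finset.add_sum_erase (Finset.HasAntidiagonal.antidiagonal n) _ (a := (0, n)) (by simp)]
  rw [show coeff 0 (rescale (p : ℚ_[p]) (exp ℚ_[p])) = 1 by simp, one_mul, add_sub_cancel_left]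
  refine Finset.sum_induction _ (fun x => ‖x‖ < 1)
    (fun x y hx hy => (IsUltrametricDist.norm_add_le_max x y).trans_lt (max_lt hx hy))
    (by simp) fun x hx => ?_
  obtain ⟨i, k⟩ := x
  simp only [Finset.mem_erase, ne_eq, Prod.mk.injEq, Finset.HasAntidiagonal.mem_antidiagonal] at hx
  have hi : i ≠ 0 := fun h => hx.1 ⟨h, by omega⟩
  rw [norm_mul]
  refine mul_lt_one_of_nonneg_of_lt_one_left (norm_nonneg _)
    (norm_coeff_rescale_exp_lt_one hi) ?_
  rw [coeff_expand]
  split_ifs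
  · have hk : k / p < n := (Nat.div_le_self k p).trans_lt (by omega)
    exact ih _ hk (hk.trans hnm)
  · simp

/-- The coefficients of the Artin–Hasse exponential are `p`-integral. -/
theorem not_dvd_den_coeff_prod_expPow (n m : ℕ) (hnm : n < p ^ m) :
    ¬ p ∣ (coeff n (∏ j ∈ Finset.range m, expPow p j ((p : ℚ) ^ j)⁻¹)).den := by
  set q := coeff n (∏ j ∈ Finset.range m, expPow p j ((p : ℚ) ^ j)⁻¹) with hq
  have hnorm : ‖(q : ℚ_[p])‖ ≤ 1 := by
    convert! norm_coeff_prod_expPow_le_one n m hnm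
    rw [hq, ← eq_ratCast (algebraMap ℚ ℚ_[p]), ← coeff_map, map_prod]
    simp only [map_expPow, map_inv₀, map_pow, map_natCast]
  have hunit := PadicInt.isUnit_den q hnorm
  rw [PadicInt.isUnit_iff, PadicInt.norm_natCast_eq_one_iff] at hunit
  exact (Nat.Prime.coprime_iff_not_dvd Fact.out).1 hunit

end ArtinHasse

end PowerSeries

/-- the coefficients `b j` of `θ∞(t) = AH(γ t)` (expanded via the
exponential series as in the Artin–Hasse product) satisfy
`ord (b j) ≥ j/(p-1)` for all `j ≥ 0`. -/
theorem theta_infty_coeff_bound (p : ℕ) (hp : p.Prime) {K : Type} [Field K] [CharZero K]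
    (ord : K → WithTop ℝ)
    (hord_top : ∀ x : K, ord x = ⊤ ↔ x = 0)
    (hord_mul : ∀ x y : K, ord (x * y) = ord x + ord y)
    (hord_add : ∀ x y : K, min (ord x) (ord y) ≤ ord (x + y))
    (hord_neg : ∀ x : K, ord (-x) = ord x)
    (hord_p : ord (p : K) = ((1 : ℝ) : WithTop ℝ))
    (hord_unit : ∀ m : ℕ, ¬ p ∣ m → m ≠ 0 → ord (m : K) = ((0 : ℝ) : WithTop ℝ))
    (γ : K)
    (hγ : ord γ = ((((p : ℝ) - 1)⁻¹ : ℝ) : WithTop ℝ))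
    (hroot : ∀ M : ℝ, ∃ N : ℕ, ∀ m ≥ N,
      (M : WithTop ℝ) ≤ ord (∑ j ∈ Finset.range (m + 1), γ ^ p ^ j / (p : K) ^ j))
    (b : ℕ → K)
    (hb : ∀ N : ℕ, b N =
      ∑ᶠ k ∈ {k : ℕ →₀ ℕ | (k.sum fun j kj => kj * p ^ j) = N},
        ∏ j ∈ (k : ℕ →₀ ℕ).support,
          (γ ^ p ^ j / (p : K) ^ j) ^ (k j) / ((k j).factorial : K))
 :
    ∀ j : ℕ, ((((j : ℝ) / ((p : ℝ) - 1)) : ℝ) : WithTop ℝ) ≤ ord (b j) := by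
  have : Fact p.Prime := ⟨hp⟩
  have hone : ord 1 = 0 := by simpa using hord_unit 1 hp.not_dvd_one one_ne_zero
  have hnat (n : ℕ) : 0 ≤ ord (n : K) := by
    induction n with
    | zero => simp [(hord_top 0).2 rfl]
    | succ n ih =>
      rw [Nat.cast_succ]
      exact (le_min ih hone.ge).trans (hord_add _ _)
  have hint (z : ℤ) : 0 ≤ ord (z : K) := by
    obtain ⟨n, rfl | rfl⟩ := z.eq_nat_or_neg
    · simpa using hnat n
    · simpa [hord_neg] using hnat n
  have hrat (q : ℚ) (hq : ¬ p ∣ q.den) : 0 ≤ ord (q : K) := by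
    have hden := hord_mul (q : K) (q.den : K)
    rw [hord_unit _ hq q.den_nz, WithTop.coe_zero, add_zero] at hden
    rw [← hden, show (q : K) * q.den = q.num by exact_mod_cast q.mul_den_eq_num]
    exact hint _
  have hpow (n : ℕ) : ord (γ ^ n) = (((n : ℝ) / ((p : ℝ) - 1) : ℝ) : WithTop ℝ) := by
    induction n with
    | zero => simpa using hone
    | succ n ih =>
      rw [pow_succ, hord_mul, ih, hγ, ← WithTop.coe_add]
      congr 1
      push_cast
      ring
  intro n
  set q : ℚ := PowerSeries.coeff n
    (∏ j ∈ Finset.range (n + 1), PowerSeries.expPow p j ((p : ℚ) ^ j)⁻¹) with hq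
  have hbn : b n = γ ^ n * (q : K) := by
    rw [hb, ← PowerSeries.coeff_prod_expPow hp.one_lt fun j => γ ^ p ^ j / (p : K) ^ j, hq,
      ← eq_ratCast (algebraMap ℚ K), ← PowerSeries.coeff_map, ← PowerSeries.coeff_rescale,
      map_prod (PowerSeries.map _), map_prod (PowerSeries.rescale γ)]
    simp only [PowerSeries.map_expPow, PowerSeries.rescale_expPow, map_inv₀, map_pow, map_natCast,
      div_eq_mul_inv]
  rw [hbn, hord_mul, hpow]
  exact le_add_of_nonneg_right (hrat q (PowerSeries.not_dvd_den_coeff_prod_expPow n (n + 1)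
    (n.lt_succ_self.trans (Nat.lt_pow_self hp.one_lt))))
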